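/- Let D̃₄ be the structure ({0, a, b, 1}; ≼, g) where ≼ is the partial order with bottom b, top a, and 0, 1 incomparable (b ≼ 0 ≼ a and b ≼ 1 ≼ a), and g is the map swapping a and b and fixing 0 and 1. Equip D̃₄² = D̃₄ × D̃₄ with the componentwise order and the componentwise action of g, and let X = {aa, bb, ab, ba, 00} ⊆ D̃₄² (writing st for the pair (s,t)). Define γ : D̃₄² → X by: γ(ab) = ab, γ(ba) = ba; γ(st) = aa if {s,t} contains a but not b; γ(st) = bb if {s,t} contains b but not a; and γ(st) = 00 if {s,t} ⊆ {0, 1}. Then X is closed under the componentwise action of g, and γ is a surjective retraction onto X that is order-preserving, commutes with the componentwise action of g, and restricts to the identity on X. -/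

import Mathlib

/-!
Every claim concerns a 16-element structure and is settled by cases. Conceptually, `γ` depends only
on the positions of `a` and `b` in a pair `st`. Applying `g` exchanges these two letters, which gives
equivariance. Passing upwards in the order can neither destroy an `a` nor create a `b`, and `aa`
and `bb` are the top and bottom of the square, which gives monotonicity.
-/

/-- The underlying set {0, a, b, 1} of the alter ego D̃₄. -/
inductive D4s : Type
  | z  -- 0
  | a
  | b
  | u  -- 1
deriving DecidableEq

/-- The partial order ≼ of D̃₄: bottom `b`, top `a`, with `0` and `1`
incomparable in the middle. -/
def D4s.le (x y : D4s) : Prop := x = .b ∨ y = .a ∨ x = y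

/-- The unary operation `g` swapping `a` and `b` and fixing `0` and `1`. -/
def D4s.g : D4s → D4s
  | .a => .b
  | .b => .a
  | x => x

/-- The componentwise order on D̃₄². -/
def le2 (p q : D4s × D4s) : Prop := D4s.le p.1 q.1 ∧ D4s.le p.2 q.2

/-- The componentwise action of `g` on D̃₄². -/
def g2 (p : D4s × D4s) : D4s × D4s := (p.1.g, p.2.g)

/-- The subset X = {aa, bb, ab, ba, 00} of D̃₄². -/
def Xset : Set (D4s × D4s) :=
  {(.a, .a), (.b, .b), (.a, .b), (.b, .a), (.z, .z)}

/-- The retraction γ : D̃₄² → X. -/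
def gam : D4s × D4s → D4s × D4s
  | (.a, .b) => (.a, .b)
  | (.b, .a) => (.b, .a)
  | (.a, .a) => (.a, .a)
  | (.a, .z) => (.a, .a)
  | (.a, .u) => (.a, .a)
  | (.z, .a) => (.a, .a)
  | (.u, .a) => (.a, .a)
  | (.b, .b) => (.b, .b)
  | (.b, .z) => (.b, .b)
  | (.b, .u) => (.b, .b)
  | (.z, .b) => (.b, .b)
  | (.u, .b) => (.b, .b)
  | (.z, .z) => (.z, .z)
  | (.z, .u) => (.z, .z)
  | (.u, .z) => (.z, .z)
  | (.u, .u) => (.z, .z)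

theorem statement7 :
    -- X is closed under the componentwise action of g
    (∀ p ∈ Xset, g2 p ∈ Xset) ∧
    -- γ is a surjection onto X
    Set.range gam = Xset ∧
    -- γ restricts to the identity on X (so γ is a retraction onto X)
    (∀ p ∈ Xset, gam p = p) ∧
    -- γ is order-preserving
    (∀ p q : D4s × D4s, le2 p q → le2 (gam p) (gam q)) ∧
    -- γ commutes with the componentwise action of g
    (∀ p : D4s × D4s, gam (g2 p) = g2 (gam p)) := by
  refine ⟨?_, ?_, ?_, ?_, ?_⟩
  · rintro p (rfl | rfl | rfl | rfl | rfl) <;> simp [Xset, g2, D4s.g]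
  · ext p
    constructor
    · rintro ⟨⟨s, t⟩, rfl⟩
      cases s <;> cases t <;> simp [Xset, gam]
    · intro hp
      -- Each element of `X` is its own preimage, as it is fixed by `γ`.
      refine ⟨p, ?_⟩
      rcases hp with rfl | rfl | rfl | rfl | rfl <;> rfl
  · rintro p (rfl | rfl | rfl | rfl | rfl) <;> rfl
  · rintro ⟨s, t⟩ ⟨s', t'⟩ ⟨hs, ht⟩
    -- By the shape of `≼`, each coordinate of the smaller pair is `b`, or lies
    -- below `a`, or is unchanged; what remains is a finite check.
    rcases hs with hs | hs | hs <;> rcases ht with ht | ht | ht <;>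
      simp only at hs ht <;> subst hs ht <;>
      (try cases s) <;> (try cases s') <;> (try cases t) <;> (try cases t') <;>
      simp [le2, D4s.le, gam]
  · rintro ⟨s, t⟩
    cases s <;> cases t <;> rfl
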